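/- (Normal-family step.) Let m ≥ 1, let Ω ⊆ ℝ^m be an open set, and let X be a metric space. Let F : T_Ω → X be a map such that for every compact set K ⊆ Ω, the restriction of F to T_K is uniformly continuous and F(T_K) is a relatively compact subset of X. Then for every sequence (t_n) ⊆ ℝ^m there exists a subsequence (t_{n_k}) and a continuous map G : T_Ω → X such that the maps z ↦ F(z + t_{n_k}) converge to G uniformly on every compact subset of T_Ω. -/

import Mathlib

/-!
This is the Arzelà–Ascoli theorem applied to the translates `z ↦ F (z + t n)`. A real translation
does not change imaginary parts, so it maps every tube `T_K` isometrically onto itself. Around a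
point `z ∈ T_Ω` choose a compact ball `K ⊆ Ω` centred at `Im z`: uniform continuity of `F` on `T_K`
gives a modulus of continuity near `z` common to all translates (`equicontinuous_translates`), and
all their values at `z` lie in the compact closure of `F(T_K)`. Hence the translates are relatively
compact in the compact-open topology of `C(T_Ω, X)` (`exists_subseq_tendsto_of_equicontinuous`).
As `T_Ω` is open in `ℂ^m`, it is locally compact and σ-compact, so that topology is first countable
and a convergent subsequence can be extracted. No completeness of `X` is needed.
-/

open Filter

/-- The tube `T_S ⊆ ℂ^m` over a base set `S ⊆ ℝ^m`: all points whose imaginary part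
(componentwise) lies in `S`. -/
def tube {m : ℕ} (S : Set (Fin m → ℝ)) : Set (Fin m → ℂ) :=
  {z | (fun i => (z i).im) ∈ S}

/-- The inclusion of a real vector `t ∈ ℝ^m` into `ℂ^m`. -/
def realVec {m : ℕ} (t : Fin m → ℝ) : Fin m → ℂ := fun i => (t i : ℂ)

/-- A sequential form of Arzelà–Ascoli: compactness is required of the values at each point only,
not of a common range, and the limit is taken in the compact-open topology. -/
theorem exists_subseq_tendsto_of_equicontinuous {Y X : Type*} [TopologicalSpace Y]
    [WeaklyLocallyCompactSpace Y] [SigmaCompactSpace Y] [MetricSpace X]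
    (f : ℕ → C(Y, X)) (hf : Equicontinuous fun n => (f n : Y → X))
    (Q : Y → Set X) (hQ : ∀ y, IsCompact (Q y)) (hfQ : ∀ n y, f n y ∈ Q y) :
    ∃ g : C(Y, X), ∃ φ : ℕ → ℕ, StrictMono φ ∧ Tendsto (f ∘ φ) atTop (nhds g) := by
  -- The pointwise closure of the family is still equicontinuous, so it consists of continuous maps.
  let A : Set (Y → X) := closure (Set.range fun n => (f n : Y → X))
  have hA : A.Equicontinuous :=
    Set.Equicontinuous.closure (equicontinuous_iff_range.1 hf)
  have hAc : IsCompact A := by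
    refine (isCompact_univ_pi hQ).of_isClosed_subset isClosed_closure ?_
    refine closure_minimal ?_ (isClosed_set_pi fun y _ => (hQ y).isClosed)
    rintro _ ⟨n, rfl⟩ y -
    exact hfQ n y
  let S : Set C(Y, X) := {g | (g : Y → X) ∈ A}
  have himg : ContinuousMap.toFun '' S = A := by
    ext g
    constructor
    · rintro ⟨h, hh, rfl⟩
      exact hh
    · intro hg
      exact ⟨⟨g, hA.continuous ⟨g, hg⟩⟩, hg, rfl⟩
  have hS : IsCompact S := by
    refine ArzelaAscoli.isCompact_of_equicontinuous S (himg ▸ hAc) ?_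
    exact hA.comp fun g : S => (⟨(g : C(Y, X)), g.2⟩ : A)
  obtain ⟨g, -, φ, hφ, h⟩ :=
    hS.isSeqCompact (x := f) fun n => subset_closure (Set.mem_range_self n)
  exact ⟨g, φ, hφ, h⟩

theorem continuous_im_pi {m : ℕ} : Continuous fun (z : Fin m → ℂ) (i : Fin m) => (z i).im := by
  fun_prop

theorem isOpen_tube {m : ℕ} {S : Set (Fin m → ℝ)} (hS : IsOpen S) : IsOpen (tube S) :=
  hS.preimage continuous_im_pi

theorem add_realVec_mem_tube {m : ℕ} {S : Set (Fin m → ℝ)} {z : Fin m → ℂ} (hz : z ∈ tube S)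
    (t : Fin m → ℝ) : z + realVec t ∈ tube S := by
  simpa [tube, realVec] using hz

theorem equicontinuous_translates {m : ℕ} {X : Type*} [MetricSpace X]
    {Ω : Set (Fin m → ℝ)} (hΩ : IsOpen Ω) {F : (Fin m → ℂ) → X}
    (hF : ∀ K : Set (Fin m → ℝ), K ⊆ Ω → IsCompact K → UniformContinuousOn F (tube K))
    (t : ℕ → Fin m → ℝ) :
    Equicontinuous fun n (z : tube Ω) => F (z + realVec (t n)) := by
  intro z
  obtain ⟨r, hr, hrΩ⟩ := Metric.nhds_basis_closedBall.mem_iff.1 (hΩ.mem_nhds z.2)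
  rw [Metric.equicontinuousAt_iff_right]
  intro ε hε
  obtain ⟨δ, hδ, h⟩ := Metric.uniformContinuousOn_iff.1 (hF _ hrΩ (isCompact_closedBall _ r)) ε hε
  have hnear : ∀ᶠ w : tube Ω in nhds z,
      (w : Fin m → ℂ) ∈ tube (Metric.closedBall (fun i => ((z : Fin m → ℂ) i).im) r) :=
    (continuous_im_pi.comp continuous_subtype_val).continuousAt.eventually
      (Metric.closedBall_mem_nhds _ hr)
  filter_upwards [hnear, Metric.ball_mem_nhds z hδ] with w hw hwδ n
  refine h _ (add_realVec_mem_tube (Metric.mem_closedBall_self hr.le) _) _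
    (add_realVec_mem_tube hw _) ?_
  rw [dist_add_right, dist_comm]
  exact hwδ

/-- Normal-family step: if `F : T_Ω → X` (`Ω ⊆ ℝ^m` open, `X` a metric space) is
uniformly continuous with relatively compact image on every `T_K` (`K ⊆ Ω` compact),
then every sequence of real translates of `F` has a subsequence converging, uniformly
on every compact subset of `T_Ω`, to a map `G` continuous on `T_Ω`. -/
theorem normal_family_step
    {m : ℕ} (hm : 1 ≤ m)
    {X : Type*} [MetricSpace X]
    (Ω : Set (Fin m → ℝ)) (hΩopen : IsOpen Ω)
    (F : (Fin m → ℂ) → X)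
    (hFuc : ∀ K : Set (Fin m → ℝ), K ⊆ Ω → IsCompact K →
      UniformContinuousOn F (tube K))
    (hFrc : ∀ K : Set (Fin m → ℝ), K ⊆ Ω → IsCompact K →
      IsCompact (closure (F '' tube K))) :
    ∀ t : ℕ → (Fin m → ℝ), ∃ φ : ℕ → ℕ, StrictMono φ ∧
      ∃ G : (Fin m → ℂ) → X, ContinuousOn G (tube Ω) ∧
        ∀ S : Set (Fin m → ℂ), S ⊆ tube Ω → IsCompact S →
          TendstoUniformlyOn (fun k z => F (z + realVec (t (φ k)))) G atTop S := by
  classical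
  intro t
  have hopen : IsOpen (tube Ω) := isOpen_tube hΩopen
  have : LocallyCompactSpace (tube Ω) := hopen.locallyCompactSpace
  have heq := equicontinuous_translates hΩopen hFuc t
  let f : ℕ → C(tube Ω, X) := fun n => ⟨fun z => F (z + realVec (t n)), heq.continuous n⟩
  obtain ⟨g, φ, hφ, hg⟩ := exists_subseq_tendsto_of_equicontinuous f heq
    (fun z => closure (F '' tube {fun i => ((z : Fin m → ℂ) i).im}))
    (fun z => hFrc _ (Set.singleton_subset_iff.2 z.2) isCompact_singleton)
    (fun n z => subset_closure
      (Set.mem_image_of_mem F (add_realVec_mem_tube (Set.mem_singleton _) _)))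
  -- The values of `G` off the tube are irrelevant; those of `F` serve.
  let G : (Fin m → ℂ) → X := fun z => if hz : z ∈ tube Ω then g ⟨z, hz⟩ else F z
  have hGg : ∀ z : tube Ω, G z = g z := fun z => dif_pos z.2
  refine ⟨φ, hφ, G, ?_, fun S hS hSc => ?_⟩
  · rw [continuousOn_iff_continuous_domRestrict]
    exact g.continuous.congr fun z => (hGg z).symm
  · have hS' : IsCompact ((↑) ⁻¹' S : Set (tube Ω)) :=
      Topology.IsInducing.subtypeVal.isCompact_preimage' hSc (by simpa using hS)
    have hu := ContinuousMap.tendsto_iff_forall_isCompact_tendstoUniformlyOn.1 hg _ hS'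
    intro U hU
    filter_upwards [hu U hU] with k hk z hz
    have := hk ⟨z, hS hz⟩ hz
    rwa [← hGg] at this
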